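/- With φ the map induced by the odd reflection at the odd simple root α_{i+1}, the odd Serre relations are preserved: [[φ(x^±_{β_{t−1},0}), φ(x^±_{β_t,0})], [φ(x^±_{β_t,0}), φ(x^±_{β_{t+1},0})]] = 0 in ŝl(m|n,Π) for every odd simple root β_t of Π₁; in particular [[[x^±_{α_i,0},x^±_{α_{i+1},0}], x^∓_{α_{i+1},0}], [x^∓_{α_{i+1},0}, [x^±_{α_{i+1},0},x^±_{α_{i+2},0}]]] = 0 and [[x^±_{α_{i−1},0}, [x^±_{α_i,0},x^±_{α_{i+1},0}]], [[x^±_{α_i,0},x^±_{α_{i+1},0}], x^∓_{α_{i+1},0}]] = 0. -/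

import Mathlib

/-!
The generators `x = (x^+_i)` and the generators `x = (x^−_i)`, paired with the generators `y` of
the opposite sign, satisfy the same list of relations (`HalfRel`), and up to a sign `φ` is given
on both by the same formula (`phiGen`).  So each claim is proved once, in an arbitrary algebra
with elements subject to `HalfRel`.

Since `[x_c, y_c] = ±h_c` acts on every `x_i` by a scalar and `[x_i, y_c] = 0` for `i ≠ c`,
bracketing `[x_i, x_c]` with `y_c` returns a scalar multiple of `x_i` (`pair_right`, `pair_left`).
Moreover `m, n ≥ 2` and `m ≠ n` give `m + n ≥ 5`, so the simple roots at positions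
`c−2, …, c+2` are distinct and those at distance at least two are orthogonal.  For an odd `β_t`:

* `t = c`: both inner brackets are multiples of `x_{c−1}` and `x_{c+1}`, which commute.
* `t = c ± 1`: here `α_t` is even, one inner bracket is a multiple of `x_t`, and what remains is
  `[[x_{t±1}, [x_t, x_c]], x_t] = 0`, a consequence of the Serre relations for the even root `α_t`
  (`bracket_even`).  The version needed for the last two displayed identities allows `α_{c−1}` to
  be odd, where it follows from `x_{c−1}² = 0` and the odd Serre relation (`bracket_odd`).
* `t = c ± 2`: as `x_c` commutes with the other generators involved, the Jacobi identity moves it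
  outside and leaves the odd Serre relation at `α_t` (`bracket_far`).
* all other `t`: `φ` fixes the three generators, and the relation is the one at `α_t`.
-/

/-!
Common framework for formalizing statements about affine super Yangians
`Y_ℏ(ŝl(m|n,Π))` attached to a simple root system `Π` of the affine
Kac–Moody superalgebra `ŝl(m|n)` of type `A^{(1)}(m−1|n−1)`.
-/

noncomputable section

namespace ASY

open scoped TensorProduct

/-- The ground ring `ℂ[ℏ]`. -/
abbrev R : Type := Polynomial ℂ

/-- The formal deformation parameter `ℏ`. -/
def hbar : R := Polynomial.X

/-- `1/2` as an element of `ℂ[ℏ]`. -/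
def half : R := Polynomial.C (1/2 : ℂ)

/-- The sign `(−1)^{p(a)p(b)}` attached to parities `pa`, `pb`. -/
def sg (pa pb : Bool) : R := if pa && pb then -1 else 1

section SuperOps

variable {Y : Type*} [Ring Y] [Algebra R Y]

/-- The supercommutator `[a,b] = ab − (−1)^{p(a)p(b)} ba` of homogeneous elements of
parities `pa` and `pb`. -/
def sbr (pa pb : Bool) (x y : Y) : Y := x * y - sg pa pb • (y * x)

/-- The super anticommutator `{a,b} = ab + (−1)^{p(a)p(b)} ba`. -/
def sac (pa pb : Bool) (x y : Y) : Y := x * y + sg pa pb • (y * x)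

/-- Iterated super-adjoint action `(ad x)^k y` for `x` of parity `pa` and `y` of parity `pb`. -/
def adN (pa pb : Bool) (x : Y) : ℕ → Y → Y
  | 0, y => y
  | k + 1, y => sbr pa (xor pb (pa && decide (k % 2 = 1))) x (adN pa pb x k y)

/-- Iterated super-bracket `[x₁,[x₂,…,[x_k, y]…]]`, all `xᵢ` of parity `pa`, `y` of parity `pb`. -/
def adSeq (pa pb : Bool) : List Y → Y → Y
  | [], y => y
  | x :: l, y => sbr pa (xor pb (pa && decide (l.length % 2 = 1))) x (adSeq pa pb l y)

end SuperOps

/-- A simple root system `Π` of the affine Kac–Moody superalgebra `ŝl(m|n)`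
(type `A^{(1)}(m−1|n−1)`): a cyclic arrangement of the `m + n` weights
`ε₁,…,ε_m, δ₁,…,δ_n`, recorded by the type of the weight at each position
(`false` = an `ε`-weight of norm `+1`, `true` = a `δ`-weight of norm `−1`);
the simple roots are `α_i = e_i − e_{i+1}` (indices mod `m+n`). -/
structure SimpleRootSystem (m n : ℕ) : Type where
  /-- the type of the weight at each position -/
  τ : Fin (m + n) → Bool
  /-- there are exactly `n` weights of `δ`-type -/
  card_delta : (Finset.univ.filter fun k => τ k = true).card = n

namespace SimpleRootSystem

variable {m n : ℕ}

/-- The norm `(e_k, e_k) = ±1` of the `k`-th weight. -/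
def w (P : SimpleRootSystem m n) (k : Fin (m + n)) : ℤ := if P.τ k then -1 else 1

variable [NeZero (m + n)]

/-- The coefficient of `e_k` in the simple root `α_i = e_i − e_{i+1}`. -/
def coeffα (i k : Fin (m + n)) : ℤ := (if k = i then 1 else 0) - (if k = i + 1 then 1 else 0)

/-- The (symmetric) Cartan matrix `a_{ij} = (α_i, α_j)` of `Π`. -/
def a (P : SimpleRootSystem m n) (i j : Fin (m + n)) : ℤ :=
  ∑ k, P.w k * coeffα i k * coeffα j k

/-- The parity of the simple root `α_i` (`true` iff `α_i` is odd, iff `a_{ii} = 0`). -/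
def par (P : SimpleRootSystem m n) (i : Fin (m + n)) : Bool := P.τ i != P.τ (i + 1)

/-- The reflection `s_{α_i}` on simple root systems: on the weight arrangement it
swaps the weights at positions `i` and `i+1`.  For `α_i` even it preserves `Π`;
for `α_i` odd it is the odd reflection `Π ↦ Π₁`. -/
def reflect (P : SimpleRootSystem m n) (i : Fin (m + n)) : SimpleRootSystem m n where
  τ := P.τ ∘ Equiv.swap i (i + 1)
  card_delta := by
    have h1 : (Finset.univ.filter fun k => (P.τ ∘ Equiv.swap i (i + 1)) k = true).card
        = (Finset.univ.filter fun k => P.τ k = true).card :=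
      Finset.card_equiv (Equiv.swap i (i + 1)) (fun k => by simp)
    rw [h1, P.card_delta]

/-- Applying a word of simple reflections to a simple root system. -/
def applyWord (P : SimpleRootSystem m n) : List (Fin (m + n)) → SimpleRootSystem m n
  | [] => P
  | c :: l => applyWord (P.reflect c) l

/-- The word consists of even reflections at every stage (i.e. it represents an
element of the Weyl group, generated by even reflections). -/
def IsEvenWord (P : SimpleRootSystem m n) : List (Fin (m + n)) → Prop
  | [] => True
  | c :: l => P.par c = false ∧ IsEvenWord (P.reflect c) l

end SimpleRootSystem

end ASY

namespace ASY

/-- Chevalley generators `x^±_i`, `h_i` of the affine Kac–Moody superalgebra `ŝl(m|n,Π)`. -/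
inductive KGen (N : ℕ) : Type
  | xp (i : Fin N)
  | xm (i : Fin N)
  | h (i : Fin N)

/-- The free algebra on the Chevalley generators. -/
abbrev KFree (m n : ℕ) : Type := FreeAlgebra R (KGen (m + n))

section KMDefs

variable {m n : ℕ}

/-- `x^+_i` in the free algebra. -/
def KXp (i : Fin (m + n)) : KFree m n := FreeAlgebra.ι R (KGen.xp i)

/-- `x^−_i` in the free algebra. -/
def KXm (i : Fin (m + n)) : KFree m n := FreeAlgebra.ι R (KGen.xm i)

/-- `h_i` in the free algebra. -/
def KH (i : Fin (m + n)) : KFree m n := FreeAlgebra.ι R (KGen.h i)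

variable [NeZero (m + n)]

/-- The defining relations of (the universal enveloping superalgebra of) the affine
Kac–Moody superalgebra `ŝl(m|n,Π)` with Chevalley generators `x^±_i`, `h_i`. -/
inductive KRel (P : SimpleRootSystem m n) : KFree m n → KFree m n → Prop
  /-- `[h_i, h_j] = 0` -/
  | hh (i j : Fin (m + n)) : KRel P (sbr false false (KH i) (KH j)) 0
  /-- `[h_i, x^+_j] = a_{ij} x^+_j` -/
  | hxp (i j : Fin (m + n)) :
      KRel P (sbr false (P.par j) (KH i) (KXp j)) (((P.a i j : ℤ) : R) • KXp j)
  /-- `[h_i, x^−_j] = −a_{ij} x^−_j` -/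
  | hxm (i j : Fin (m + n)) :
      KRel P (sbr false (P.par j) (KH i) (KXm j)) ((-(P.a i j : ℤ) : R) • KXm j)
  /-- `[x^+_i, x^−_j] = δ_{ij} h_i` -/
  | pm (i j : Fin (m + n)) :
      KRel P (sbr (P.par i) (P.par j) (KXp i) (KXm j)) (if i = j then KH i else 0)
  /-- Serre relation `(ad x^+_i)^{1+|a_{ij}|}(x^+_j) = 0` for `i ≠ j` -/
  | serrep (i j : Fin (m + n)) (hij : i ≠ j) :
      KRel P (adN (P.par i) (P.par j) (KXp i) (1 + (P.a i j).natAbs) (KXp j)) 0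
  /-- Serre relation `(ad x^−_i)^{1+|a_{ij}|}(x^−_j) = 0` for `i ≠ j` -/
  | serrem (i j : Fin (m + n)) (hij : i ≠ j) :
      KRel P (adN (P.par i) (P.par j) (KXm i) (1 + (P.a i j).natAbs) (KXm j)) 0
  /-- `[x^+_t, x^+_t] = 0` for `α_t` odd -/
  | oddp (t : Fin (m + n)) (ht : P.par t = true) : KRel P (sbr true true (KXp t) (KXp t)) 0
  /-- `[x^−_t, x^−_t] = 0` for `α_t` odd -/
  | oddm (t : Fin (m + n)) (ht : P.par t = true) : KRel P (sbr true true (KXm t) (KXm t)) 0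
  /-- `[[x^+_{t−1},x^+_t],[x^+_t,x^+_{t+1}]] = 0` for `α_t` odd -/
  | oddSp (t : Fin (m + n)) (ht : P.par t = true) :
      KRel P (sbr (xor (P.par (t - 1)) true) (xor true (P.par (t + 1)))
        (sbr (P.par (t - 1)) true (KXp (t - 1)) (KXp t))
        (sbr true (P.par (t + 1)) (KXp t) (KXp (t + 1)))) 0
  /-- `[[x^−_{t−1},x^−_t],[x^−_t,x^−_{t+1}]] = 0` for `α_t` odd -/
  | oddSm (t : Fin (m + n)) (ht : P.par t = true) :
      KRel P (sbr (xor (P.par (t - 1)) true) (xor true (P.par (t + 1)))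
        (sbr (P.par (t - 1)) true (KXm (t - 1)) (KXm t))
        (sbr true (P.par (t + 1)) (KXm t) (KXm (t + 1)))) 0

/-- (The universal enveloping superalgebra of) the affine Kac–Moody superalgebra
`ŝl(m|n,Π)`, presented by the Chevalley generators and relations. -/
abbrev KM (P : SimpleRootSystem m n) : Type := RingQuot (KRel P)

/-- Projection onto `ŝl(m|n,Π)`. -/
def mkK (P : SimpleRootSystem m n) : KFree m n →ₐ[R] KM P := RingQuot.mkAlgHom R (KRel P)

/-- Chevalley generator `x^+_i` of `ŝl(m|n,Π)`. -/
def kxp (P : SimpleRootSystem m n) (i : Fin (m + n)) : KM P := mkK P (KXp i)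

/-- Chevalley generator `x^−_i` of `ŝl(m|n,Π)`. -/
def kxm (P : SimpleRootSystem m n) (i : Fin (m + n)) : KM P := mkK P (KXm i)

/-- Chevalley generator `h_i` of `ŝl(m|n,Π)`. -/
def kh (P : SimpleRootSystem m n) (i : Fin (m + n)) : KM P := mkK P (KH i)

/-- The image under `φ` (the map induced by the odd reflection at the odd simple root `α_c`)
of the Cartan generator `h_{β_j}` of `ŝl(m|n,Π₁)` inside `ŝl(m|n,Π)`. -/
def phiH (P : SimpleRootSystem m n) (c j : Fin (m + n)) : KM P :=
  if j = c then -(kh P c)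
  else if j = c - 1 then kh P (c - 1) + kh P c
  else if j = c + 1 then kh P (c + 1) + kh P c
  else kh P j

/-- The image under `φ` of the generator `x^+_{β_j}` of `ŝl(m|n,Π₁)` inside `ŝl(m|n,Π)`. -/
def phiXp (P : SimpleRootSystem m n) (c j : Fin (m + n)) : KM P :=
  if j = c then kxm P c
  else if j = c - 1 then sbr (P.par (c - 1)) true (kxp P (c - 1)) (kxp P c)
  else if j = c + 1 then sbr (P.par (c + 1)) true (kxp P (c + 1)) (kxp P c)
  else kxp P j

/-- The image under `φ` of the generator `x^−_{β_j}` of `ŝl(m|n,Π₁)` inside `ŝl(m|n,Π)`. -/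
def phiXm (P : SimpleRootSystem m n) (c j : Fin (m + n)) : KM P :=
  if j = c then kxp P c
  else if j = c - 1 then -(sbr (P.par (c - 1)) true (kxm P (c - 1)) (kxm P c))
  else if j = c + 1 then -(sbr (P.par (c + 1)) true (kxm P (c + 1)) (kxm P c))
  else kxm P j

end KMDefs

end ASY

namespace ASY

/-! ### Identities for the superbracket in an associative algebra -/

section SuperIdentities

lemma half_mul_two : half * 2 = 1 := by
  rw [half, ← map_ofNat Polynomial.C 2, ← map_mul]; norm_num

variable {Y : Type*} [Ring Y] [Algebra R Y]

lemma sbr_smul_left (p q : Bool) (s : R) (x y : Y) :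
    sbr p q (s • x) y = s • sbr p q x y := by
  simp only [sbr, smul_sub, smul_mul_assoc, mul_smul_comm, smul_comm s]

lemma sbr_smul_right (p q : Bool) (s : R) (x y : Y) :
    sbr p q x (s • y) = s • sbr p q x y := by
  simp only [sbr, smul_sub, smul_mul_assoc, mul_smul_comm, smul_comm s]

lemma sbr_zero_left (p q : Bool) (y : Y) : sbr p q 0 y = 0 := by simp [sbr]

lemma sbr_zero_right (p q : Bool) (x : Y) : sbr p q x 0 = 0 := by simp [sbr]

/-- Super skew-symmetry `[x,y] = −(−1)^{pq}[y,x]`. -/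
lemma sbr_skew (p q : Bool) (x y : Y) : sbr p q x y = (-sg p q) • sbr q p y x := by
  cases p <;> cases q <;> simp [sbr, sg, add_comm]

lemma sbr_swap_eq_zero {p q : Bool} {x y : Y} (h : sbr q p y x = 0) : sbr p q x y = 0 := by
  rw [sbr_skew, h, smul_zero]

/-- Super Jacobi identity: `ad x` is a superderivation. -/
lemma sbr_jacobi (p q r : Bool) (x y z : Y) :
    sbr p (xor q r) x (sbr q r y z) =
      sbr (xor p q) r (sbr p q x y) z + sg p q • sbr q (xor p r) y (sbr p r x z) := by
  cases p <;> cases q <;> cases r <;> simp [sbr, sg] <;> noncomm_ring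

/-- If `a` commutes with `y` and is an eigenvector of `ad [x, y]`, then `[[a, x], y]` is a scalar
multiple of `a`. -/
lemma pair_right {p : Bool} {a x y : Y} (h : sbr p true a y = 0)
    (hx : ∃ s : R, sbr true true x y * a - a * sbr true true x y = s • a) :
    ∃ s : R, sbr (xor p true) true (sbr p true a x) y = s • a := by
  obtain ⟨s, hs⟩ := hx
  refine ⟨-s, ?_⟩
  rw [neg_smul, ← hs]
  cases p <;> simp [sbr, sg] at h ⊢
  · linear_combination (norm := noncomm_ring) -(h * x) - x * h
  · linear_combination (norm := noncomm_ring) x * h - h * x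

/-- The version of `pair_right` with `y` on the left: `[y, [a, x]]` is a scalar multiple of `a`. -/
lemma pair_left {p : Bool} {a x y : Y} (h : sbr p true a y = 0)
    (hx : ∃ s : R, sbr true true x y * a - a * sbr true true x y = s • a) :
    ∃ s : R, sbr true (xor p true) y (sbr p true a x) = s • a := by
  obtain ⟨s, hs⟩ := pair_right h hx
  exact ⟨_, by rw [sbr_skew, hs, smul_smul]⟩

/-- For even `b` the Serre relations imply `[[a, [b, d]], b] = 0`: from `[a, d] = 0` one gets
`[a, [b, d]] = −[[b, a], d]`, and applying `ad b` to the two sides gives `[[b, a], [b, d]]` and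
its negative, so twice the bracket vanishes. -/
lemma bracket_even {pa pd : Bool} {a b d : Y} (had : sbr pa pd a d = 0)
    (hba : sbr false pa b (sbr false pa b a) = 0)
    (hbd : sbr false pd b (sbr false pd b d) = 0) :
    sbr (xor pa pd) false (sbr pa pd a (sbr false pd b d)) b = 0 := by
  apply sbr_swap_eq_zero
  have j1 := sbr_jacobi false pa pd b a (sbr false pd b d)
  have j2 := sbr_jacobi false pa pd b a d
  have j3 := sbr_jacobi false pa pd b (sbr false pa b a) d
  simp only [Bool.false_xor, sg, Bool.false_and, Bool.false_eq_true, if_false, one_smul] at j1 j2 j3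
  rw [hbd, sbr_zero_right, add_zero] at j1
  rw [had, sbr_zero_right] at j2
  rw [hba, sbr_zero_left, zero_add] at j3
  have j4 : sbr pa pd a (sbr false pd b d) = - sbr pa pd (sbr false pa b a) d := by
    rw [eq_neg_iff_add_eq_zero, add_comm, ← j2]
  have j5 : sbr false (xor pa pd) b (sbr pa pd a (sbr false pd b d))
      = - sbr pa pd (sbr false pa b a) (sbr false pd b d) := by
    rw [j4, ← j3, ← neg_one_smul R, sbr_smul_right, neg_one_smul]
  have h2 : (2 : R) • sbr false (xor pa pd) b (sbr pa pd a (sbr false pd b d)) = 0 := by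
    rw [two_smul]; nth_rewrite 1 [j5]; rw [j1]; simp
  have h3 := congrArg (half • ·) h2
  simp only [smul_smul, smul_zero] at h3
  rwa [half_mul_two, one_smul] at h3

/-- For odd `b` with `b² = 0`, the odd Serre relation at `b` implies `[[a, [b, d]], b] = 0`:
since `[[b, d], b] = 0`, the left side equals `±[[b, d], [a, b]]`. -/
lemma bracket_odd {pa pd : Bool} {a b d : Y} (hbb : b * b = 0)
    (hS : sbr (xor pa true) (xor true pd) (sbr pa true a b) (sbr true pd b d) = 0) :
    sbr (xor pa (xor true pd)) true (sbr pa (xor true pd) a (sbr true pd b d)) b = 0 := by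
  have h0 : sbr (xor true pd) true (sbr true pd b d) b = 0 := by
    have e1 : b * d * b = b * (d * b) := mul_assoc _ _ _
    have e2 : b * (b * d) = 0 := by rw [← mul_assoc, hbb, zero_mul]
    have e3 : d * b * b = 0 := by rw [mul_assoc, hbb, mul_zero]
    cases pd <;> simp [sbr, sg, sub_mul, mul_sub, add_mul, mul_add, e1, e2, e3]
  have j := sbr_jacobi pa (xor true pd) true a (sbr true pd b d) b
  rw [h0, sbr_zero_right, sbr_swap_eq_zero hS, smul_zero, add_zero] at j
  exact j.symm

/-- If `d` commutes with `a` and `b`, the odd Serre relation `[[a, b], [b, f]] = 0` persists when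
`f` is replaced by `[f, d]`, because `[b, [f, d]] = [[b, f], d]` and `d` commutes with `[a, b]`. -/
lemma bracket_far {pa pf pd : Bool} {a b f d : Y} (had : sbr pa pd a d = 0)
    (hbd : sbr true pd b d = 0)
    (hS : sbr (xor pa true) (xor true pf) (sbr pa true a b) (sbr true pf b f) = 0) :
    sbr (xor pa true) (xor true (xor pf pd)) (sbr pa true a b)
      (sbr true (xor pf pd) b (sbr pf pd f d)) = 0 := by
  have h1 := sbr_jacobi true pf pd b f d
  rw [hbd, sbr_zero_right, smul_zero, add_zero] at h1
  have h2 := sbr_jacobi pa true pd a b d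
  rw [had, hbd, sbr_zero_right, sbr_zero_right, smul_zero, add_zero] at h2
  have h3 := sbr_jacobi (xor pa true) (xor true pf) pd (sbr pa true a b) (sbr true pf b f) d
  rw [hS, ← h2, sbr_zero_left, sbr_zero_right, smul_zero, add_zero] at h3
  rw [h1, ← h3, Bool.xor_assoc]

end SuperIdentities

/-! ### The relations within one sign, and the reflected generators -/

lemma shift_ne {ι : Type*} [CommRing ι] {u : ι}
    (hN : u ≠ 0 ∧ 2 * u ≠ 0 ∧ 3 * u ≠ 0 ∧ 4 * u ≠ 0) (c : ι) :
    c + u ≠ c ∧ c - u ≠ c ∧ c + u ≠ c - u ∧ c + u + u ≠ c ∧ c + u + u ≠ c + u := by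
  obtain ⟨h1, h2, h3, h4⟩ := hN
  refine ⟨?_, ?_, ?_, ?_, ?_⟩ <;> grind

/-- The relations of `ŝl(m|n,Π)` that enter the argument, for the generators `x` of one sign with
the generators `y` of the opposite sign; `p` is the parity and `c` the odd node of the reflection.
The index set is an abstract commutative ring, with the neighbours of `i` being `i + u` and
`i - u`, so that inequalities between indices become statements of ring arithmetic.
Orthogonal generators commute (`far`), the Serre relations hold at even roots with both neighbours
(`evenR`, `evenL`), odd generators square to zero (`sq`) and satisfy the odd Serre relations
(`oddS`), `x i` commutes with `y c` for `i ≠ c` (`cross`), and `[x c, y c]` acts diagonally on the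
generators `x i` (`weight`). -/
structure HalfRel {ι : Type*} [CommRing ι] {Y : Type*} [Ring Y] [Algebra R Y]
    (u : ι) (p : ι → Bool) (c : ι) (x y : ι → Y) : Prop where
  far : ∀ i j, i ≠ j → i ≠ j + u → j ≠ i + u → sbr (p i) (p j) (x i) (x j) = 0
  evenR : ∀ i, p i = false →
    sbr false (p (i + u)) (x i) (sbr false (p (i + u)) (x i) (x (i + u))) = 0
  evenL : ∀ i, p i = false →
    sbr false (p (i - u)) (x i) (sbr false (p (i - u)) (x i) (x (i - u))) = 0
  sq : ∀ t, p t = true → x t * x t = 0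
  oddS : ∀ t, p t = true →
    sbr (xor (p (t - u)) true) (xor true (p (t + u)))
      (sbr (p (t - u)) true (x (t - u)) (x t)) (sbr true (p (t + u)) (x t) (x (t + u))) = 0
  cross : ∀ i, i ≠ c → sbr (p i) true (x i) (y c) = 0
  weight : ∀ i, ∃ s : R,
    sbr true true (x c) (y c) * x i - x i * sbr true true (x c) (y c) = s • x i

/-- The images of the generators of one sign under the odd reflection at `c`.  The scalar `e` is
the sign in front of the brackets: `1` for `x = x^+` and `-1` for `x = x^−`. -/
def phiGen {ι : Type*} [CommRing ι] [DecidableEq ι] {Y : Type*} [Ring Y] [Algebra R Y]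
    (u : ι) (p : ι → Bool) (c : ι) (e : R) (x y : ι → Y) (j : ι) : Y :=
  if j = c then y c
  else if j = c - u then e • sbr (p (c - u)) true (x (c - u)) (x c)
  else if j = c + u then e • sbr (p (c + u)) true (x (c + u)) (x c)
  else x j

namespace HalfRel

variable {ι : Type*} [CommRing ι] {Y : Type*} [Ring Y] [Algebra R Y]
  {u : ι} {p : ι → Bool} {c : ι} {x y : ι → Y}

lemma commute_neighbours (H : HalfRel u p c x y)
    (hN : u ≠ 0 ∧ 2 * u ≠ 0 ∧ 3 * u ≠ 0 ∧ 4 * u ≠ 0) :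
    sbr (p (c - u)) (p (c + u)) (x (c - u)) (x (c + u)) = 0 := by
  obtain ⟨h1, h2, h3, h4⟩ := id hN
  exact H.far _ _ (by grind) (by grind) (by grind)

/-- `[[x_{c−2}, [x_{c−1}, x_c]], x_{c−1}] = 0`, whatever the parity of `α_{c−1}`. -/
lemma left_triple (H : HalfRel u p c x y)
    (hN : u ≠ 0 ∧ 2 * u ≠ 0 ∧ 3 * u ≠ 0 ∧ 4 * u ≠ 0)
    (hc : p c = true) :
    sbr (xor (p (c - u - u)) (xor (p (c - u)) true)) (p (c - u))
      (sbr (p (c - u - u)) (xor (p (c - u)) true) (x (c - u - u))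
        (sbr (p (c - u)) true (x (c - u)) (x c))) (x (c - u)) = 0 := by
  obtain ⟨h1, h2, h3, h4⟩ := id hN
  have hcc : c - u + u = c := sub_add_cancel c u
  have had := H.far (c - u - u) c (by grind) (by grind) (by grind)
  rw [hc] at had
  cases hp : p (c - u) with
  | false =>
    have hR := H.evenR _ hp
    have hL := H.evenL _ hp
    rw [hcc, hc] at hR
    simpa using bracket_even had hL hR
  | true =>
    have hS := H.oddS _ hp
    rw [hcc, hc] at hS
    exact bracket_odd (H.sq _ hp) hS

/-- The mirror image of `left_triple`: `[x_{c+1}, [[x_{c+1}, x_c], x_{c+2}]] = 0` for `α_{c+1}`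
even. -/
lemma right_triple (H : HalfRel u p c x y)
    (hN : u ≠ 0 ∧ 2 * u ≠ 0 ∧ 3 * u ≠ 0 ∧ 4 * u ≠ 0)
    (hc : p c = true) (hp : p (c + u) = false) :
    sbr false (xor true (p (c + u + u))) (x (c + u))
      (sbr true (p (c + u + u)) (sbr false true (x (c + u)) (x c)) (x (c + u + u))) = 0 := by
  obtain ⟨h1, h2, h3, h4⟩ := id hN
  have hcc : c + u - u = c := add_sub_cancel_right c u
  have had := H.far (c + u + u) c (by grind) (by grind) (by grind)
  rw [hc] at had
  have hR := H.evenR _ hp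
  have hL := H.evenL _ hp
  rw [hcc, hc] at hL
  have := sbr_swap_eq_zero (bracket_even had hR hL)
  rw [sbr_skew true, sbr_smul_right, Bool.xor_comm true, this, smul_zero]

/-- The odd Serre relations for the reflected generators, where `q` is the parity of the reflected
root system: the parities of both neighbours of `c` are flipped. -/
lemma odd_serre_phiGen [DecidableEq ι] (H : HalfRel u p c x y)
    (hN : u ≠ 0 ∧ 2 * u ≠ 0 ∧ 3 * u ≠ 0 ∧ 4 * u ≠ 0)
    (hc : p c = true) (e : R) (q : ι → Bool)
    (hq : q c = true) (hqL : q (c - u) = xor (p (c - u)) true)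
    (hqR : q (c + u) = xor (p (c + u)) true)
    (hqo : ∀ j, j ≠ c → j ≠ c - u → j ≠ c + u → q j = p j) (t : ι) (ht : q t = true) :
    sbr (xor (q (t - u)) (q t)) (xor (q t) (q (t + u)))
      (sbr (q (t - u)) (q t) (phiGen u p c e x y (t - u)) (phiGen u p c e x y t))
      (sbr (q t) (q (t + u)) (phiGen u p c e x y t) (phiGen u p c e x y (t + u))) = 0 := by
  obtain ⟨h1, h2, h3, h4⟩ := id hN
  have nL : c - u ≠ c := by grind
  have nR : c + u ≠ c := by grind
  have nLR : c + u ≠ c - u := by grind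
  have fc : phiGen u p c e x y c = y c := by simp [phiGen]
  have fL : phiGen u p c e x y (c - u) = e • sbr (p (c - u)) true (x (c - u)) (x c) := by
    simp only [phiGen, if_neg nL, if_true]
  have fR : phiGen u p c e x y (c + u) = e • sbr (p (c + u)) true (x (c + u)) (x c) := by
    simp only [phiGen, if_neg nR, if_neg nLR, if_true]
  have fo : ∀ j, j ≠ c → j ≠ c - u → j ≠ c + u → phiGen u p c e x y j = x j := by
    intro j a1 a2 a3
    simp only [phiGen, if_neg a1, if_neg a2, if_neg a3]
  by_cases tc : t = c
  · subst tc
    obtain ⟨s, hs⟩ := pair_right (H.cross _ nL) (H.weight (t - u))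
    obtain ⟨s', hs'⟩ := pair_left (H.cross _ nR) (H.weight (t + u))
    rw [fc, fL, fR, hq, hqL, hqR, sbr_smul_left, sbr_smul_right, hs, hs']
    simp only [sbr_smul_left, sbr_smul_right]
    have := H.commute_neighbours hN
    simp [this]
  by_cases tL : t = c - u
  · subst tL
    have hcc : c - u + u = c := sub_add_cancel c u
    obtain ⟨s, hs⟩ := pair_right (H.cross _ nL) (H.weight (c - u))
    have hp : p (c - u) = false := by simpa [hqL] using ht
    have h := H.left_triple hN hc
    rw [hcc, fc, fL, fo _ (by grind) (by grind) (by grind), hq,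
      hqo (c - u - u) (by grind) (by grind) (by grind), hqL]
    simp only [sbr_smul_left, sbr_smul_right, hs]
    rw [hp] at h ⊢
    simp at h ⊢
    simp [h]
  by_cases tR : t = c + u
  · subst tR
    have hcc : c + u - u = c := add_sub_cancel_right c u
    obtain ⟨s, hs⟩ := pair_left (H.cross _ nR) (H.weight (c + u))
    have hp : p (c + u) = false := by simpa [hqR] using ht
    have h := H.right_triple hN hc hp
    rw [hcc, fc, fR, fo _ (by grind) (by grind) (by grind), hq,
      hqo (c + u + u) (by grind) (by grind) (by grind), hqR]
    simp only [sbr_smul_left, sbr_smul_right, hs]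
    rw [hp] at ⊢
    simp at h ⊢
    simp [h]
  have qt := hqo t tc tL tR
  have pt : p t = true := by rw [← qt, ht]
  have hS := H.oddS t pt
  rw [ht, fo t tc tL tR]
  by_cases tLL : t + u = c - u
  · have a1 := H.far (t - u) c (by grind) (by grind) (by grind)
    have a2 := H.far t c (by grind) (by grind) (by grind)
    rw [fo (t - u) (by grind) (by grind) (by grind), hqo (t - u) (by grind) (by grind) (by grind),
      tLL, fL, hqL]
    rw [tLL] at hS
    rw [hc] at a1 a2
    rw [pt] at a2
    have := bracket_far a1 a2 hS
    simp only [sbr_smul_right, this, smul_zero]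
  by_cases tRR : t - u = c + u
  · have a1 := H.far (t + u) c (by grind) (by grind) (by grind)
    have a2 := H.far t c (by grind) (by grind) (by grind)
    rw [fo (t + u) (by grind) (by grind) (by grind), hqo (t + u) (by grind) (by grind) (by grind),
      tRR, fR, hqR]
    rw [tRR] at hS
    rw [hc] at a1 a2
    rw [pt] at a2
    -- Reversing the inner and the outer brackets turns this into the mirror image of `t = c - 2 * u`.
    have hS' : sbr (xor (p (t + u)) true) (xor true (p (c + u)))
        (sbr (p (t + u)) true (x (t + u)) (x t)) (sbr true (p (c + u)) (x t) (x (c + u))) = 0 := by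
      rw [sbr_skew (p (t + u)), sbr_skew true (p (c + u)), sbr_smul_left, sbr_smul_right,
        Bool.xor_comm (p (t + u)), Bool.xor_comm true (p (c + u)), sbr_swap_eq_zero hS]
      simp
    have := bracket_far a1 a2 hS'
    rw [sbr_skew _ true, sbr_skew true (p (t + u))]
    simp only [sbr_smul_right, sbr_smul_left]
    rw [Bool.xor_comm true (p (t + u)), Bool.xor_comm (xor (p (c + u)) true) true,
      sbr_swap_eq_zero this]
    simp
  rw [fo (t - u) (by grind) (by grind) (by grind), hqo (t - u) (by grind) (by grind) (by grind),
    fo (t + u) (by grind) (by grind) (by grind), hqo (t + u) (by grind) (by grind) (by grind)]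
  exact hS

/-- `[[[x_{c−1}, x_c], y_c], [y_c, [x_c, x_{c+1}]]] = 0`. -/
lemma centre_bracket (H : HalfRel u p c x y)
    (hN : u ≠ 0 ∧ 2 * u ≠ 0 ∧ 3 * u ≠ 0 ∧ 4 * u ≠ 0) :
    sbr (p (c - u)) (p (c + u))
      (sbr (xor (p (c - u)) true) true (sbr (p (c - u)) true (x (c - u)) (x c)) (y c))
      (sbr true (xor true (p (c + u))) (y c) (sbr true (p (c + u)) (x c) (x (c + u)))) = 0 := by
  obtain ⟨nR, nL, -⟩ := shift_ne hN c
  obtain ⟨s, hs⟩ := pair_right (H.cross _ nL) (H.weight (c - u))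
  obtain ⟨s', hs'⟩ := pair_left (H.cross _ nR) (H.weight (c + u))
  rw [hs, sbr_skew true (p (c + u)), sbr_smul_right, Bool.xor_comm true, hs']
  simp only [sbr_smul_left, sbr_smul_right, H.commute_neighbours hN, smul_zero]

/-- `[[x_{c−2}, [x_{c−1}, x_c]], [[x_{c−1}, x_c], y_c]] = 0`. -/
lemma left_bracket (H : HalfRel u p c x y)
    (hN : u ≠ 0 ∧ 2 * u ≠ 0 ∧ 3 * u ≠ 0 ∧ 4 * u ≠ 0)
    (hc : p c = true) :
    sbr (xor (p (c - u - u)) (xor (p (c - u)) true)) (p (c - u))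
      (sbr (p (c - u - u)) (xor (p (c - u)) true) (x (c - u - u))
        (sbr (p (c - u)) true (x (c - u)) (x c)))
      (sbr (xor (p (c - u)) true) true (sbr (p (c - u)) true (x (c - u)) (x c)) (y c)) = 0 := by
  obtain ⟨-, nL, -⟩ := shift_ne hN c
  obtain ⟨s, hs⟩ := pair_right (H.cross _ nL) (H.weight (c - u))
  rw [hs, sbr_smul_right, H.left_triple hN hc, smul_zero]

end HalfRel

/-! ### Indices, Cartan matrix and parities -/

section
open scoped Fin.CommRing

/-- The multiples of `1` that have to be nonzero for `c - 2, …, c + 2` to be distinct. -/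
lemma fin_ne {N : ℕ} [NeZero N] (hN : 5 ≤ N) :
    (1 : Fin N) ≠ 0 ∧ 2 * (1 : Fin N) ≠ 0 ∧ 3 * (1 : Fin N) ≠ 0 ∧ 4 * (1 : Fin N) ≠ 0 := by
  obtain ⟨k, rfl⟩ := Nat.exists_eq_add_of_le' hN
  simp only [mul_one]
  refine ⟨?_, ?_, ?_, ?_⟩ <;> simp [Fin.ext_iff, Nat.mod_eq_of_lt]

lemma fin_shift_ne {N : ℕ} [NeZero N] (hN : 5 ≤ N) (c : Fin N) :
    c + 1 ≠ c ∧ c - 1 ≠ c ∧ c + 1 ≠ c - 1 ∧ c + 1 + 1 ≠ c ∧ c + 1 + 1 ≠ c + 1 :=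
  shift_ne (fin_ne hN) c

end

lemma fin_two {N : ℕ} [NeZero N] : (2 : Fin N) = 1 + 1 := by
  simp [Fin.ext_iff, Fin.val_add]

section Cartan

variable {m n : ℕ} [NeZero (m + n)] (P : SimpleRootSystem m n)

/-- `(α_i, α_j)` with `α_i = e_i − e_{i+1}` expanded, leaving two terms of the sum. -/
lemma cartan_eq (i j : Fin (m + n)) :
    P.a i j = P.w i * SimpleRootSystem.coeffα j i -
      P.w (i + 1) * SimpleRootSystem.coeffα j (i + 1) := by
  have h : ∀ k, P.w k * SimpleRootSystem.coeffα i k * SimpleRootSystem.coeffα j k =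
      (if k = i then P.w k * SimpleRootSystem.coeffα j k else 0) -
        (if k = i + 1 then P.w k * SimpleRootSystem.coeffα j k else 0) := by
    intro k
    rw [SimpleRootSystem.coeffα]
    split_ifs <;> ring
  simp [SimpleRootSystem.a, h, Finset.sum_sub_distrib]

lemma cartan_far {i j : Fin (m + n)} (h : i ≠ j) (h1 : i ≠ j + 1) (h2 : j ≠ i + 1) :
    P.a i j = 0 := by
  rw [cartan_eq]
  simp [SimpleRootSystem.coeffα, h, h1, h2.symm]

lemma cartan_succ (hN : 5 ≤ m + n) (i : Fin (m + n)) : (P.a i (i + 1)).natAbs = 1 := by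
  obtain ⟨h1, h2, h3, h4, h5⟩ := fin_shift_ne hN i
  have e1 := h1.symm
  have e2 := h4.symm
  rw [cartan_eq]
  simp only [SimpleRootSystem.coeffα, SimpleRootSystem.w, if_neg e1, if_neg e2, if_neg h5.symm]
  split_ifs <;> simp

lemma cartan_pred (hN : 5 ≤ m + n) (i : Fin (m + n)) : (P.a i (i - 1)).natAbs = 1 := by
  obtain ⟨e3, h2, e2, -, -⟩ := fin_shift_ne hN i
  have e1 := h2.symm
  have e4 : i - 1 + 1 = i := sub_add_cancel i 1
  rw [cartan_eq]
  simp only [SimpleRootSystem.coeffα, SimpleRootSystem.w, e4, if_neg e1, if_neg e2, if_neg e3]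
  split_ifs <;> simp_all

lemma par_reflect_self (c : Fin (m + n)) : (P.reflect c).par c = P.par c := by
  simp only [SimpleRootSystem.par, SimpleRootSystem.reflect, Function.comp]
  simp [bne_comm]

lemma par_reflect_pred (hN : 5 ≤ m + n) {c : Fin (m + n)} (hc : P.par c = true) :
    (P.reflect c).par (c - 1) = xor (P.par (c - 1)) true := by
  obtain ⟨-, e1, h3, -, -⟩ := fin_shift_ne hN c
  have e2 := h3.symm
  simp only [SimpleRootSystem.par, SimpleRootSystem.reflect, Function.comp, sub_add_cancel,
    Equiv.swap_apply_left, Equiv.swap_apply_of_ne_of_ne e1 e2] at hc ⊢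
  revert hc
  cases P.τ c <;> cases P.τ (c + 1) <;> cases P.τ (c - 1) <;> simp

lemma par_reflect_succ (hN : 5 ≤ m + n) {c : Fin (m + n)} (hc : P.par c = true) :
    (P.reflect c).par (c + 1) = xor (P.par (c + 1)) true := by
  obtain ⟨-, -, -, e1, e2⟩ := fin_shift_ne hN c
  simp only [SimpleRootSystem.par, SimpleRootSystem.reflect, Function.comp,
    Equiv.swap_apply_right, Equiv.swap_apply_of_ne_of_ne e1 e2] at hc ⊢
  revert hc
  cases P.τ c <;> cases P.τ (c + 1) <;> cases P.τ (c + 1 + 1) <;> simp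

lemma par_reflect_far {c j : Fin (m + n)} (h : j ≠ c) (h1 : j ≠ c - 1) (h2 : j ≠ c + 1) :
    (P.reflect c).par j = P.par j := by
  have e1 : j + 1 ≠ c := fun h' => h1 (eq_sub_of_add_eq h')
  have e2 : j + 1 ≠ c + 1 := fun h' => h (add_right_cancel h')
  simp only [SimpleRootSystem.par, SimpleRootSystem.reflect, Function.comp,
    Equiv.swap_apply_of_ne_of_ne e1 e2, Equiv.swap_apply_of_ne_of_ne h h2]

end Cartan

/-! ### The Chevalley generators satisfy `HalfRel` -/

section Relations

open scoped Fin.CommRing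

variable {m n : ℕ} [NeZero (m + n)] (P : SimpleRootSystem m n)

lemma mkK_eq {u v : KFree m n} (h : KRel P u v) : mkK P u = mkK P v :=
  RingQuot.mkAlgHom_rel R h

lemma mkK_sbr (p q : Bool) (u v : KFree m n) :
    mkK P (sbr p q u v) = sbr p q (mkK P u) (mkK P v) := by
  simp only [sbr, map_sub, map_smul, map_mul]

lemma adN_one {Y : Type*} [Ring Y] [Algebra R Y] (p q : Bool) (u v : Y) :
    adN p q u 1 v = sbr p q u v := by
  simp [adN]

lemma adN_two {Y : Type*} [Ring Y] [Algebra R Y] (q : Bool) (u v : Y) :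
    adN false q u 2 v = sbr false q u (sbr false q u v) := by
  simp [adN]

lemma sq_zero {Y : Type*} [Ring Y] [Algebra R Y] {u : Y} (h : sbr true true u u = 0) :
    u * u = 0 := by
  have h2 : (2 : R) • (u * u) = 0 := by
    rw [two_smul, ← h]; simp [sbr, sg]
  have h3 := congrArg (half • ·) h2
  simp only [smul_smul, smul_zero] at h3
  rwa [half_mul_two, one_smul] at h3

lemma halfRel_plus (hN : 5 ≤ m + n) {c : Fin (m + n)} (hc : P.par c = true) :
    HalfRel 1 P.par c (kxp P) (kxm P) where
  far i j h h1 h2 := by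
    have := mkK_eq P (KRel.serrep i j h)
    rwa [cartan_far P h h1 h2, Int.natAbs_zero, add_zero, adN_one, mkK_sbr, map_zero] at this
  evenR i hi := by
    have := mkK_eq P (KRel.serrep i (i + 1) (fin_shift_ne hN i).1.symm)
    rwa [cartan_succ P hN, hi, adN_two, mkK_sbr, mkK_sbr, map_zero] at this
  evenL i hi := by
    have := mkK_eq P (KRel.serrep i (i - 1) (fin_shift_ne hN i).2.1.symm)
    rwa [cartan_pred P hN, hi, adN_two, mkK_sbr, mkK_sbr, map_zero] at this
  sq t ht := by
    have := mkK_eq P (KRel.oddp t ht)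
    rw [mkK_sbr, map_zero] at this
    exact sq_zero this
  oddS t ht := by
    have := mkK_eq P (KRel.oddSp t ht)
    rwa [mkK_sbr, mkK_sbr, mkK_sbr, map_zero] at this
  cross i hi := by
    have := mkK_eq P (KRel.pm i c)
    rwa [if_neg hi, mkK_sbr, map_zero, hc] at this
  weight i := by
    have h := mkK_eq P (KRel.pm c c)
    rw [if_pos rfl, mkK_sbr, hc] at h
    have h' := mkK_eq P (KRel.hxp c i)
    rw [mkK_sbr, map_smul, sbr] at h'
    simp only [sg, Bool.false_and, Bool.false_eq_true, if_false, one_smul] at h'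
    rw [← h] at h'
    exact ⟨_, h'⟩

lemma halfRel_minus (hN : 5 ≤ m + n) {c : Fin (m + n)} (hc : P.par c = true) :
    HalfRel 1 P.par c (kxm P) (kxp P) where
  far i j h h1 h2 := by
    have := mkK_eq P (KRel.serrem i j h)
    rwa [cartan_far P h h1 h2, Int.natAbs_zero, add_zero, adN_one, mkK_sbr, map_zero] at this
  evenR i hi := by
    have := mkK_eq P (KRel.serrem i (i + 1) (fin_shift_ne hN i).1.symm)
    rwa [cartan_succ P hN, hi, adN_two, mkK_sbr, mkK_sbr, map_zero] at this
  evenL i hi := by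
    have := mkK_eq P (KRel.serrem i (i - 1) (fin_shift_ne hN i).2.1.symm)
    rwa [cartan_pred P hN, hi, adN_two, mkK_sbr, mkK_sbr, map_zero] at this
  sq t ht := by
    have := mkK_eq P (KRel.oddm t ht)
    rw [mkK_sbr, map_zero] at this
    exact sq_zero this
  oddS t ht := by
    have := mkK_eq P (KRel.oddSm t ht)
    rwa [mkK_sbr, mkK_sbr, mkK_sbr, map_zero] at this
  cross i hi := by
    have := mkK_eq P (KRel.pm c i)
    rw [if_neg hi.symm, mkK_sbr, map_zero, hc] at this
    exact sbr_swap_eq_zero this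
  weight i := by
    have h := mkK_eq P (KRel.pm c c)
    rw [if_pos rfl, mkK_sbr, hc, sbr_skew] at h
    simp only [sg, Bool.and_self, if_true, neg_neg, one_smul] at h
    have h' := mkK_eq P (KRel.hxm c i)
    rw [mkK_sbr, map_smul, sbr] at h'
    simp only [sg, Bool.false_and, Bool.false_eq_true, if_false, one_smul] at h'
    rw [← h] at h'
    exact ⟨_, h'⟩

lemma phiXp_eq (c : Fin (m + n)) : phiXp P c = phiGen 1 P.par c 1 (kxp P) (kxm P) := by
  funext j
  simp only [phiXp, phiGen, one_smul]

lemma phiXm_eq (c : Fin (m + n)) : phiXm P c = phiGen 1 P.par c (-1) (kxm P) (kxp P) := by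
  have h : ∀ z : KM P, (-1 : R) • z = -z := fun z => neg_one_smul R z
  funext j
  simp only [phiXm, phiGen, h]

end Relations

/-- With `φ` the map induced by the odd reflection at the odd simple root
`α_c` (`c = i+1`), the odd Serre relations are preserved:
`[[φ(x^±_{β_{t−1},0}), φ(x^±_{β_t,0})], [φ(x^±_{β_t,0}), φ(x^±_{β_{t+1},0})]] = 0` in
`ŝl(m|n,Π)` for every odd simple root `β_t` of `Π₁`; in particular
`[[[x^±_{α_{c−1},0},x^±_{α_c,0}], x^∓_{α_c,0}], [x^∓_{α_c,0}, [x^±_{α_c,0},x^±_{α_{c+1},0}]]] = 0`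
and
`[[x^±_{α_{c−2},0}, [x^±_{α_{c−1},0},x^±_{α_c,0}]], [[x^±_{α_{c−1},0},x^±_{α_c,0}], x^∓_{α_c,0}]] = 0`. -/
theorem phi_odd_serre_relations (m n : ℕ) [NeZero (m + n)]
    (hm : 2 ≤ m) (hn : 2 ≤ n) (hmn : m ≠ n)
    (P : SimpleRootSystem m n) (c : Fin (m + n)) (hodd : P.par c = true) :
    (∀ t : Fin (m + n), (P.reflect c).par t = true →
      (let q := (P.reflect c).par
       sbr (xor (q (t - 1)) (q t)) (xor (q t) (q (t + 1)))
         (sbr (q (t - 1)) (q t) (phiXp P c (t - 1)) (phiXp P c t))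
         (sbr (q t) (q (t + 1)) (phiXp P c t) (phiXp P c (t + 1))) = 0 ∧
       sbr (xor (q (t - 1)) (q t)) (xor (q t) (q (t + 1)))
         (sbr (q (t - 1)) (q t) (phiXm P c (t - 1)) (phiXm P c t))
         (sbr (q t) (q (t + 1)) (phiXm P c t) (phiXm P c (t + 1))) = 0)) ∧
    (let pA := xor (P.par (c - 1)) true
     let Ap := sbr (P.par (c - 1)) true (kxp P (c - 1)) (kxp P c)
     let Am := sbr (P.par (c - 1)) true (kxm P (c - 1)) (kxm P c)
     let Bp := sbr pA true Ap (kxm P c)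
     let Bm := sbr pA true Am (kxp P c)
     let pD := xor true (P.par (c + 1))
     let Dp := sbr true (P.par (c + 1)) (kxp P c) (kxp P (c + 1))
     let Dm := sbr true (P.par (c + 1)) (kxm P c) (kxm P (c + 1))
     let Ep := sbr true pD (kxm P c) Dp
     let Em := sbr true pD (kxp P c) Dm
     sbr (P.par (c - 1)) (P.par (c + 1)) Bp Ep = 0 ∧
     sbr (P.par (c - 1)) (P.par (c + 1)) Bm Em = 0 ∧
     (let pF := xor (P.par (c - 2)) pA
      sbr pF (P.par (c - 1)) (sbr (P.par (c - 2)) pA (kxp P (c - 2)) Ap) Bp = 0 ∧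
      sbr pF (P.par (c - 1)) (sbr (P.par (c - 2)) pA (kxm P (c - 2)) Am) Bm = 0)) := by
  -- `m = n = 2` is excluded by `m ≠ n`.
  have hN : 5 ≤ m + n := by omega
  have Hp := halfRel_plus P hN hodd
  have Hm := halfRel_minus P hN hodd
  have hc2 : c - 2 = c - 1 - 1 := by rw [fin_two, sub_sub]
  -- `Fin.instCommRing` is only a scoped instance, and `HalfRel` needs a ring of indices.
  let _ := Fin.instCommRing (m + n)
  refine ⟨fun t ht => ⟨?_, ?_⟩, Hp.centre_bracket (fin_ne hN), Hm.centre_bracket (fin_ne hN), ?_, ?_⟩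
  · rw [phiXp_eq]
    exact Hp.odd_serre_phiGen (fin_ne hN) hodd 1 _ ((par_reflect_self P c).trans hodd)
      (par_reflect_pred P hN hodd) (par_reflect_succ P hN hodd)
      (fun j => par_reflect_far P) t ht
  · rw [phiXm_eq]
    exact Hm.odd_serre_phiGen (fin_ne hN) hodd (-1) _ ((par_reflect_self P c).trans hodd)
      (par_reflect_pred P hN hodd) (par_reflect_succ P hN hodd)
      (fun j => par_reflect_far P) t ht
  · rw [hc2]
    exact Hp.left_bracket (fin_ne hN) hodd
  · rw [hc2]
    exact Hm.left_bracket (fin_ne hN) hodd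

end ASY
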